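/- p-version of the relative Fisher information bound: for every p ∈ (1,2] and every smooth h : 𝕋^d × ℝ^d → (0,∞) bounded above and below by positive constants with bounded gradient, ∫_{𝕋^d × ℝ^d} |∇_x( ((Πh)^{p−1} − h^{p−1})/(p−1) )|² h^{2−p} dμ ≤ ∫_{𝕋^d × ℝ^d} h^{p−2} |∇_x h|² dμ − ∫_{𝕋^d} (Πh)^{p−2} |∇_x Πh|² dx. -/

import Mathlib

/-!
Write `G = Πh`. Since `∇ₓ((G^{p-1} - h^{p-1})/(p-1)) = G^{p-2}∇G - h^{p-2}∇ₓh`, the integrand on the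
left expands to `G^{2p-4}|∇G|² h^{2-p} - 2 G^{p-2} ∇G·∇ₓh + h^{p-2}|∇ₓh|²`. Average this over `v` at
fixed `x`. Differentiation under the integral, `Π(∇ₓh) = ∇G`, turns the cross term into
`-2 G^{p-2}|∇G|²`. The power `2-p` lies in `[0,1]`, so Jensen's inequality `Π(h^{2-p}) ≤ G^{2-p}`
bounds the first term by `G^{p-2}|∇G|²`. Hence the left side is at most
`Π(h^{p-2}|∇ₓh|²) - G^{p-2}|∇G|²` at every `x`, and it remains to integrate in `x`.
-/

open MeasureTheory Real Filter

noncomputable section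

/-- The standard Gaussian density `ℳ(v) = (2π)^{-d/2} exp(-|v|²/2)` on `ℝ^d`. -/
def gauss (d : ℕ) (v : Fin d → ℝ) : ℝ :=
  (2 * Real.pi) ^ (-(d : ℝ) / 2) * Real.exp (-(∑ i, v i ^ 2) / 2)

/-- Fundamental domain `[0,1]^d` of the torus `𝕋^d`; the normalized Lebesgue measure on
the torus is the restriction of Lebesgue measure to this cube. -/
def cube (d : ℕ) : Set (Fin d → ℝ) := Set.Icc 0 1

/-- A function of `(x,v)` represents a function on `𝕋^d × ℝ^d` iff it is `ℤ^d`-periodic in `x`. -/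
def IsPeriodic (d : ℕ) (f : (Fin d → ℝ) → (Fin d → ℝ) → ℝ) : Prop :=
  ∀ (x v : Fin d → ℝ) (k : Fin d → ℤ), f (x + fun i => (k i : ℝ)) v = f x v

/-- The projection `Πf(x) = ∫ f(x,u) ℳ(u) du`. -/
def proj (d : ℕ) (f : (Fin d → ℝ) → (Fin d → ℝ) → ℝ) (x : Fin d → ℝ) : ℝ :=
  ∫ u, f x u * gauss d u

/-- Euclidean dot product on `ℝ^d`. -/
def dotp (d : ℕ) (a b : Fin d → ℝ) : ℝ := ∑ i, a i * b i

/-- Squared Euclidean norm on `ℝ^d`. -/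
def nsq (d : ℕ) (a : Fin d → ℝ) : ℝ := ∑ i, a i ^ 2

/-- Gradient in the `x` variable. -/
def gradx (d : ℕ) (f : (Fin d → ℝ) → (Fin d → ℝ) → ℝ) (x v : Fin d → ℝ) : Fin d → ℝ :=
  fun i => fderiv ℝ (fun y => f y v) x (Pi.single i 1)

/-- Gradient in the `v` variable. -/
def gradv (d : ℕ) (f : (Fin d → ℝ) → (Fin d → ℝ) → ℝ) (x v : Fin d → ℝ) : Fin d → ℝ :=
  fun i => fderiv ℝ (fun w => f x w) v (Pi.single i 1)

/-- Gradient of a function of `x` only. -/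
def grad1 (d : ℕ) (g : (Fin d → ℝ) → ℝ) (x : Fin d → ℝ) : Fin d → ℝ :=
  fun i => fderiv ℝ g x (Pi.single i 1)

/-- Laplacian in the `v` variable. -/
def lapv (d : ℕ) (f : (Fin d → ℝ) → (Fin d → ℝ) → ℝ) (x v : Fin d → ℝ) : ℝ :=
  ∑ i, fderiv ℝ (fun w => gradv d f x w i) v (Pi.single i 1)

/-- Integral against `μ = ℳ(v) dv dx` on `𝕋^d × ℝ^d`. -/
def intMu (d : ℕ) (F : (Fin d → ℝ) → (Fin d → ℝ) → ℝ) : ℝ :=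
  ∫ x in cube d, ∫ v, F x v * gauss d v

/-- `I^X(h) = ∫ |∇_x h|²/h dμ`. -/
def IX (d : ℕ) (h : (Fin d → ℝ) → (Fin d → ℝ) → ℝ) : ℝ :=
  intMu d fun x v => nsq d (gradx d h x v) / h x v

/-- `I^V(h) = ∫ |∇_v h|²/h dμ`. -/
def IV (d : ℕ) (h : (Fin d → ℝ) → (Fin d → ℝ) → ℝ) : ℝ :=
  intMu d fun x v => nsq d (gradv d h x v) / h x v

/-- `I^M(h) = ∫ (∇_x h · ∇_v h)/h dμ`. -/
def IM (d : ℕ) (h : (Fin d → ℝ) → (Fin d → ℝ) → ℝ) : ℝ :=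
  intMu d fun x v => dotp d (gradx d h x v) (gradv d h x v) / h x v

/-- The full Fisher information `I(h) = ∫ |∇_{x,v} h|²/h dμ`. -/
def Ifull (d : ℕ) (h : (Fin d → ℝ) → (Fin d → ℝ) → ℝ) : ℝ :=
  intMu d fun x v => (nsq d (gradx d h x v) + nsq d (gradv d h x v)) / h x v

/-- `I^{ΠX}(h) = ∫_{𝕋^d} |∇_x Πh|²/Πh dx`. -/
def IPiX (d : ℕ) (h : (Fin d → ℝ) → (Fin d → ℝ) → ℝ) : ℝ :=
  ∫ x in cube d, nsq d (grad1 d (proj d h) x) / proj d h x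

/-- `I^{ΠX/X}(h) = ∫ (|∇_x(Πh/h)|²/(Πh/h)) h dμ`. -/
def IPiXX (d : ℕ) (h : (Fin d → ℝ) → (Fin d → ℝ) → ℝ) : ℝ :=
  intMu d fun x v =>
    nsq d (gradx d (fun y w => proj d h y / h y w) x v) / (proj d h x / h x v) * h x v

/-- `I^{ΠV/V}(h) = ∫ (|∇_v h|²/h)(Πh/h) dμ`. -/
def IPiVV (d : ℕ) (h : (Fin d → ℝ) → (Fin d → ℝ) → ℝ) : ℝ :=
  intMu d fun x v => nsq d (gradv d h x v) / h x v * (proj d h x / h x v)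

/-- The relative entropy `H(h) = ∫ h log h dμ`. -/
def Hent (d : ℕ) (h : (Fin d → ℝ) → (Fin d → ℝ) → ℝ) : ℝ :=
  intMu d fun x v => h x v * Real.log (h x v)

/-- The projected entropy `H_Π(h) = ∫_{𝕋^d} Πh log Πh dx`. -/
def HPi (d : ℕ) (h : (Fin d → ℝ) → (Fin d → ℝ) → ℝ) : ℝ :=
  ∫ x in cube d, proj d h x * Real.log (proj d h x)

/-- The local average speed `U(x) = ∫ v h(x,v) ℳ(v) dv`. -/
def Uvec (d : ℕ) (h : (Fin d → ℝ) → (Fin d → ℝ) → ℝ) (x : Fin d → ℝ) : Fin d → ℝ :=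
  fun i => ∫ v, v i * h x v * gauss d v

/-- The divergence `∇_x · U`. -/
def divU (d : ℕ) (h : (Fin d → ℝ) → (Fin d → ℝ) → ℝ) (x : Fin d → ℝ) : ℝ :=
  ∑ i, fderiv ℝ (fun y => Uvec d h y i) x (Pi.single i 1)

/-- The `p`-entropy `H^{(p)}(h) = ∫ (h^p - h)/(p(p-1)) dμ`. -/
def Hp (d : ℕ) (p : ℝ) (h : (Fin d → ℝ) → (Fin d → ℝ) → ℝ) : ℝ :=
  intMu d fun x v => (h x v ^ p - h x v) / (p * (p - 1))

/-- The projected `p`-entropy `H_Π^{(p)}(h) = ∫_{𝕋^d} ((Πh)^p - Πh)/(p(p-1)) dx`. -/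
def HpPi (d : ℕ) (p : ℝ) (h : (Fin d → ℝ) → (Fin d → ℝ) → ℝ) : ℝ :=
  ∫ x in cube d, ((proj d h x) ^ p - proj d h x) / (p * (p - 1))

/-- The `p`-Fisher information `I^{(p)}(h) = ∫ h^{p-2} |∇_{x,v} h|² dμ`. -/
def Ipfull (d : ℕ) (p : ℝ) (h : (Fin d → ℝ) → (Fin d → ℝ) → ℝ) : ℝ :=
  intMu d fun x v => h x v ^ (p - 2) * (nsq d (gradx d h x v) + nsq d (gradv d h x v))

/-- The spatial `p`-Fisher information `∫ h^{p-2} |∇_x h|² dμ`. -/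
def IpX (d : ℕ) (p : ℝ) (h : (Fin d → ℝ) → (Fin d → ℝ) → ℝ) : ℝ :=
  intMu d fun x v => h x v ^ (p - 2) * nsq d (gradx d h x v)

/-- Regularity of a time-dependent `h`: smooth, periodic in `x`, bounded above and below by
positive constants, with all partial derivatives bounded. -/
def Regular (d : ℕ) (h : ℝ → (Fin d → ℝ) → (Fin d → ℝ) → ℝ) : Prop :=
  ContDiff ℝ (⊤ : ℕ∞) (fun q : ℝ × (Fin d → ℝ) × (Fin d → ℝ) => h q.1 q.2.1 q.2.2) ∧
  (∀ t, IsPeriodic d (h t)) ∧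
  (∃ c C : ℝ, 0 < c ∧ ∀ t x v, c ≤ h t x v ∧ h t x v ≤ C) ∧
  (∀ n : ℕ, ∃ C : ℝ, ∀ q : ℝ × (Fin d → ℝ) × (Fin d → ℝ),
    ‖iteratedFDeriv ℝ n (fun r : ℝ × (Fin d → ℝ) × (Fin d → ℝ) => h r.1 r.2.1 r.2.2) q‖ ≤ C)

/-- Regularity of a time-independent `h`: smooth, periodic in `x`, bounded above and below by
positive constants, with bounded gradient. -/
def RegularStatic (d : ℕ) (h : (Fin d → ℝ) → (Fin d → ℝ) → ℝ) : Prop :=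
  ContDiff ℝ (⊤ : ℕ∞) (fun q : (Fin d → ℝ) × (Fin d → ℝ) => h q.1 q.2) ∧
  IsPeriodic d h ∧
  (∃ c C : ℝ, 0 < c ∧ ∀ x v, c ≤ h x v ∧ h x v ≤ C) ∧
  (∃ C : ℝ, ∀ q : (Fin d → ℝ) × (Fin d → ℝ),
    ‖fderiv ℝ (fun r : (Fin d → ℝ) × (Fin d → ℝ) => h r.1 r.2) q‖ ≤ C)

/-- `h` solves the linear relaxation Boltzmann equation `∂_t h + v·∇_x h = λ(Πh - h)` for `t ≥ 0`. -/
def SolvesLRB (d : ℕ) (lam : ℝ) (h : ℝ → (Fin d → ℝ) → (Fin d → ℝ) → ℝ) : Prop :=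
  ∀ t x v, 0 ≤ t →
    deriv (fun s => h s x v) t + dotp d v (gradx d (h t) x v)
      = lam * (proj d (h t) x - h t x v)

/-- `h` solves the free transport equation `∂_t h + v·∇_x h = 0` for `t ≥ 0`. -/
def SolvesTransport (d : ℕ) (h : ℝ → (Fin d → ℝ) → (Fin d → ℝ) → ℝ) : Prop :=
  ∀ t x v, 0 ≤ t →
    deriv (fun s => h s x v) t + dotp d v (gradx d (h t) x v) = 0

/-- `h` solves the pure relaxation equation `∂_t h = λ(Πh - h)` for `t ≥ 0`. -/
def SolvesCollision (d : ℕ) (lam : ℝ) (h : ℝ → (Fin d → ℝ) → (Fin d → ℝ) → ℝ) : Prop :=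
  ∀ t x v, 0 ≤ t →
    deriv (fun s => h s x v) t = lam * (proj d (h t) x - h t x v)

/-- `h` solves the kinetic Fokker–Planck equation `∂_t h + v·∇_x h = Δ_v h - v·∇_v h` for `t ≥ 0`. -/
def SolvesKFP (d : ℕ) (h : ℝ → (Fin d → ℝ) → (Fin d → ℝ) → ℝ) : Prop :=
  ∀ t x v, 0 ≤ t →
    deriv (fun s => h s x v) t + dotp d v (gradx d (h t) x v)
      = lapv d (h t) x v - dotp d v (gradv d (h t) x v)

section WeightedSquares

variable {V ι : Type*} [MeasurableSpace V] {ν : Measure V} {s a : V → ℝ} {t : ℝ}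

lemma sub_sq_mul_weight_eq {s : ℝ} (hs : s ≠ 0) (c a : ℝ) :
    (c - s⁻¹ * a) ^ 2 * s = c ^ 2 * s - 2 * c * a + s⁻¹ * a ^ 2 := by
  field_simp
  ring

lemma integrable_sub_sq_mul_weight (hs_pos : ∀ v, 0 < s v) (hs : Integrable s ν)
    (ha : Integrable a ν) (hsa : Integrable (fun v => (s v)⁻¹ * a v ^ 2) ν) (c : ℝ) :
    Integrable (fun v => (c - (s v)⁻¹ * a v) ^ 2 * s v) ν := by
  simp_rw [fun v => sub_sq_mul_weight_eq (hs_pos v).ne' c (a v)]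
  exact ((hs.const_mul _).sub (ha.const_mul _)).add hsa

lemma integral_sub_sq_mul_weight_le (hs_pos : ∀ v, 0 < s v) (hs : Integrable s ν)
    (ha : Integrable a ν) (hsa : Integrable (fun v => (s v)⁻¹ * a v ^ 2) ν)
    (ht : 0 < t) (hst : ∫ v, s v ∂ν ≤ t) :
    ∫ v, (t⁻¹ * ∫ w, a w ∂ν - (s v)⁻¹ * a v) ^ 2 * s v ∂ν
      ≤ ∫ v, (s v)⁻¹ * a v ^ 2 ∂ν - t⁻¹ * (∫ v, a v ∂ν) ^ 2 := by
  set b := ∫ v, a v ∂ν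
  have hsub : Integrable (fun v => (t⁻¹ * b) ^ 2 * s v - 2 * (t⁻¹ * b) * a v) ν :=
    (hs.const_mul _).sub (ha.const_mul _)
  calc ∫ v, (t⁻¹ * b - (s v)⁻¹ * a v) ^ 2 * s v ∂ν
      = (t⁻¹ * b) ^ 2 * ∫ v, s v ∂ν - 2 * (t⁻¹ * b) * b + ∫ v, (s v)⁻¹ * a v ^ 2 ∂ν := by
        simp_rw [fun v => sub_sq_mul_weight_eq (hs_pos v).ne' (t⁻¹ * b) (a v)]
        rw [integral_add hsub hsa, integral_sub (hs.const_mul _) (ha.const_mul _),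
          integral_const_mul, integral_const_mul]
    _ ≤ (t⁻¹ * b) ^ 2 * t - 2 * (t⁻¹ * b) * b + ∫ v, (s v)⁻¹ * a v ^ 2 ∂ν := by gcongr
    _ = ∫ v, (s v)⁻¹ * a v ^ 2 ∂ν - t⁻¹ * b ^ 2 := by
        field_simp
        ring

lemma integral_sum_sub_sq_mul_weight_le [Fintype ι] {a : ι → V → ℝ} (hs_pos : ∀ v, 0 < s v)
    (hs : Integrable s ν) (ha : ∀ i, Integrable (a i) ν)
    (hsa : ∀ i, Integrable (fun v => (s v)⁻¹ * a i v ^ 2) ν)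
    (ht : 0 < t) (hst : ∫ v, s v ∂ν ≤ t) :
    ∫ v, (∑ i, (t⁻¹ * ∫ w, a i w ∂ν - (s v)⁻¹ * a i v) ^ 2) * s v ∂ν
      ≤ ∫ v, (s v)⁻¹ * ∑ i, a i v ^ 2 ∂ν - t⁻¹ * ∑ i, (∫ v, a i v ∂ν) ^ 2 := by
  simp only [Finset.sum_mul, Finset.mul_sum]
  rw [integral_finsetSum _ fun i _ => integrable_sub_sq_mul_weight hs_pos hs (ha i) (hsa i) _,
    integral_finsetSum _ fun i _ => hsa i, ← Finset.sum_sub_distrib]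
  exact Finset.sum_le_sum fun i _ =>
    integral_sub_sq_mul_weight_le hs_pos hs (ha i) (hsa i) ht hst

end WeightedSquares

lemma rpow_sub_two_eq_inv {x : ℝ} (hx : 0 ≤ x) (p : ℝ) : x ^ (p - 2) = (x ^ (2 - p))⁻¹ := by
  rw [← neg_sub, rpow_neg hx]

lemma integral_rpow_le_rpow_integral {V : Type*} [MeasurableSpace V] {ν : Measure V}
    [IsProbabilityMeasure ν] {f : V → ℝ} {r : ℝ} (hr0 : 0 ≤ r) (hr1 : r ≤ 1)
    (hf : ∀ v, 0 ≤ f v) (hfi : Integrable f ν) (hfr : Integrable (fun v => f v ^ r) ν) :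
    ∫ v, f v ^ r ∂ν ≤ (∫ v, f v ∂ν) ^ r :=
  (concaveOn_rpow hr0 hr1).le_map_integral (continuous_rpow_const hr0).continuousOn isClosed_Ici
    (ae_of_all _ hf) hfi hfr

section Gradient

variable {E ι : Type*} [NormedAddCommGroup E] [NormedSpace ℝ E]

lemma hasFDerivAt_rpow_sub_rpow_div {f g : E → ℝ} {f' g' : E →L[ℝ] ℝ} {x : E} {q : ℝ}
    (hq : q ≠ 0) (hf : HasFDerivAt f f' x) (hg : HasFDerivAt g g' x) (hfx : f x ≠ 0)
    (hgx : g x ≠ 0) :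
    HasFDerivAt (fun y => (f y ^ q - g y ^ q) / q)
      (f x ^ (q - 1) • f' - g x ^ (q - 1) • g') x := by
  have h := ((hf.rpow_const (p := q) (.inl hfx)).fun_sub
    (hg.rpow_const (p := q) (.inl hgx))).const_mul q⁻¹
  rw [smul_sub, smul_smul, smul_smul, inv_mul_cancel_left₀ hq, inv_mul_cancel_left₀ hq] at h
  simpa only [div_eq_inv_mul] using h

variable [Fintype ι]

/-- The sum of the squared derivatives of `f` at `x` along the directions `e i`. It is `|∇f(x)|²`
when `e` is an orthonormal basis. -/
def gradSq (e : ι → E) (f : E → ℝ) (x : E) : ℝ := ∑ i, fderiv ℝ f x (e i) ^ 2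

lemma gradSq_nonneg (e : ι → E) (f : E → ℝ) (x : E) : 0 ≤ gradSq e f x :=
  Finset.sum_nonneg fun _ _ => sq_nonneg _

lemma gradSq_le (e : ι → E) {f : E → ℝ} {x : E} {K : ℝ} (hK : ‖fderiv ℝ f x‖ ≤ K) :
    gradSq e f x ≤ ∑ i, (K * ‖e i‖) ^ 2 :=
  Finset.sum_le_sum fun i _ => sq_le_sq.2 <|
    ((fderiv ℝ f x).le_of_opNorm_le hK (e i)).trans (le_abs_self _)

end Gradient

/-- The average `x ↦ ∫ h(x,v) dν(v)` of `h` over the second variable; this is `Πh` when `ν` is the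
Gaussian measure. -/
def velocityAverage {X V : Type*} [MeasurableSpace V] (ν : Measure V) (h : X → V → ℝ) (x : X) : ℝ :=
  ∫ v, h x v ∂ν

/-- Functions of position and velocity that are pinched between two positive constants and
differentiable in the position with bounded derivative. The velocity carries only a measurable
structure, so joint measurability replaces continuity. -/
structure IsRegularDensity {E V : Type*} [NormedAddCommGroup E] [NormedSpace ℝ E]
    [MeasurableSpace E] [MeasurableSpace V] (h : E → V → ℝ) : Prop where
  measurable : Measurable (Function.uncurry h)
  differentiable : ∀ v, Differentiable ℝ fun x => h x v
  stronglyMeasurable_fderiv :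
    StronglyMeasurable fun q : E × V => fderiv ℝ (fun y => h y q.2) q.1
  exists_mem_Icc : ∃ c C : ℝ, 0 < c ∧ ∀ x v, h x v ∈ Set.Icc c C
  exists_norm_fderiv_le : ∃ K : ℝ, ∀ x v, ‖fderiv ℝ (fun y => h y v) x‖ ≤ K

namespace IsRegularDensity

variable {E V ι : Type*} [NormedAddCommGroup E] [NormedSpace ℝ E] [MeasurableSpace E]
  [MeasurableSpace V] {ν : Measure V} {h : E → V → ℝ}

lemma pos (hh : IsRegularDensity h) (x : E) (v : V) : 0 < h x v := by
  obtain ⟨c, C, hc, hcC⟩ := hh.exists_mem_Icc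
  exact hc.trans_le (hcC x v).1

lemma exists_abs_rpow_le (hh : IsRegularDensity h) (r : ℝ) :
    ∃ M, ∀ x v, |h x v ^ r| ≤ M := by
  obtain ⟨c, C, hc, hcC⟩ := hh.exists_mem_Icc
  have hcont : ContinuousOn (fun y : ℝ => y ^ r) (Set.Icc c C) := fun y hy =>
    (continuousAt_rpow_const y r (.inl (hc.trans_le hy.1).ne')).continuousWithinAt
  obtain ⟨M, hM⟩ := isCompact_Icc.exists_bound_of_continuousOn hcont
  exact ⟨M, fun x v => hM _ (hcC x v)⟩

lemma integrable_rpow [IsFiniteMeasure ν] (hh : IsRegularDensity h) (r : ℝ) (x : E) :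
    Integrable (fun v => h x v ^ r) ν := by
  obtain ⟨M, hM⟩ := hh.exists_abs_rpow_le r
  exact .of_bound ((hh.measurable.comp measurable_prodMk_left).pow_const r).aestronglyMeasurable M
    (ae_of_all _ (hM x))

lemma integrable [IsFiniteMeasure ν] (hh : IsRegularDensity h) (x : E) :
    Integrable (h x) ν := by
  simpa only [rpow_one] using hh.integrable_rpow (ν := ν) 1 x

lemma integrable_fderiv [IsFiniteMeasure ν] (hh : IsRegularDensity h) (x : E) :
    Integrable (fun v => fderiv ℝ (fun y => h y v) x) ν := by
  obtain ⟨K, hK⟩ := hh.exists_norm_fderiv_le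
  exact .of_bound
    (hh.stronglyMeasurable_fderiv.comp_measurable measurable_prodMk_left).aestronglyMeasurable K
    (ae_of_all _ (hK x))

section FisherDensity

variable [Fintype ι]

lemma measurable_rpow_mul_gradSq (hh : IsRegularDensity h) (r : ℝ) (e : ι → E) :
    Measurable fun q : E × V => h q.1 q.2 ^ r * gradSq e (fun y => h y q.2) q.1 :=
  (hh.measurable.pow_const r).mul <| Finset.measurable_fun_sum _ fun i _ =>
    (StronglyMeasurable.apply_continuousLinearMap hh.stronglyMeasurable_fderiv
      (e i)).measurable.pow_const 2

lemma exists_abs_rpow_mul_gradSq_le (hh : IsRegularDensity h) (r : ℝ) (e : ι → E) :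
    ∃ M, ∀ x v, |h x v ^ r * gradSq e (fun y => h y v) x| ≤ M := by
  obtain ⟨M, hM⟩ := hh.exists_abs_rpow_le r
  obtain ⟨K, hK⟩ := hh.exists_norm_fderiv_le
  refine ⟨M * ∑ i, (K * ‖e i‖) ^ 2, fun x v => ?_⟩
  rw [abs_mul, abs_of_nonneg (gradSq_nonneg e _ x)]
  exact mul_le_mul (hM x v) (gradSq_le e (hK x v)) (gradSq_nonneg e _ x)
    ((abs_nonneg _).trans (hM x v))

lemma integrable_prod_rpow_mul_gradSq (hh : IsRegularDensity h) (μ : Measure (E × V))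
    [IsFiniteMeasure μ] (r : ℝ) (e : ι → E) :
    Integrable (fun q => h q.1 q.2 ^ r * gradSq e (fun y => h y q.2) q.1) μ := by
  obtain ⟨M, hM⟩ := hh.exists_abs_rpow_mul_gradSq_le r e
  exact .of_bound (hh.measurable_rpow_mul_gradSq r e).aestronglyMeasurable M
    (ae_of_all _ fun q => hM q.1 q.2)

end FisherDensity

lemma integrable_rpow_mul_fderiv_sq [IsFiniteMeasure ν] (hh : IsRegularDensity h) (r : ℝ)
    (x e : E) : Integrable (fun v => h x v ^ r * fderiv ℝ (fun y => h y v) x e ^ 2) ν := by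
  obtain ⟨M, hM⟩ := hh.exists_abs_rpow_mul_gradSq_le r fun _ : Unit => e
  have hmeas := (hh.measurable_rpow_mul_gradSq r fun _ : Unit => e).comp
    (measurable_prodMk_left (x := x))
  simpa [gradSq, Function.comp_def] using
    Integrable.of_bound hmeas.aestronglyMeasurable M (ae_of_all _ (hM x))

section VelocityAverage

lemma hasFDerivAt_velocityAverage [IsFiniteMeasure ν] (hh : IsRegularDensity h) (x : E) :
    HasFDerivAt (velocityAverage ν h) (∫ v, fderiv ℝ (fun y => h y v) x ∂ν) x := by
  obtain ⟨K, hK⟩ := hh.exists_norm_fderiv_le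
  exact hasFDerivAt_integral_of_dominated_of_fderiv_le univ_mem
    (.of_forall fun y => (hh.integrable y).aestronglyMeasurable) (hh.integrable x)
    (hh.integrable_fderiv x).aestronglyMeasurable (ae_of_all _ fun v y _ => hK y v)
    (integrable_const K) (ae_of_all _ fun v y _ => (hh.differentiable v y).hasFDerivAt)

lemma fderiv_velocityAverage_apply [IsFiniteMeasure ν] (hh : IsRegularDensity h) (x e : E) :
    fderiv ℝ (velocityAverage ν h) x e = ∫ v, fderiv ℝ (fun y => h y v) x e ∂ν := by
  rw [(hh.hasFDerivAt_velocityAverage x).fderiv,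
    ContinuousLinearMap.integral_apply (hh.integrable_fderiv x)]

variable [IsProbabilityMeasure ν]

variable (ν) in
protected lemma velocityAverage (hh : IsRegularDensity h) :
    IsRegularDensity fun x (_ : V) => velocityAverage ν h x where
  measurable := (hh.measurable.stronglyMeasurable.integral_prod_right' (ν := ν)).measurable.comp
    measurable_fst
  differentiable _ x := (hh.hasFDerivAt_velocityAverage x).differentiableAt
  stronglyMeasurable_fderiv := by
    simp_rw [fun x => (hh.hasFDerivAt_velocityAverage (ν := ν) x).fderiv]
    exact hh.stronglyMeasurable_fderiv.integral_prod_right'.comp_measurable measurable_fst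
  exists_mem_Icc := by
    obtain ⟨c, C, hc, hcC⟩ := hh.exists_mem_Icc
    exact ⟨c, C, hc, fun x _ => (convex_Icc c C).integral_mem isClosed_Icc
      (ae_of_all _ (hcC x)) (hh.integrable x)⟩
  exists_norm_fderiv_le := by
    obtain ⟨K, hK⟩ := hh.exists_norm_fderiv_le
    refine ⟨K, fun x _ => ?_⟩
    rw [(hh.hasFDerivAt_velocityAverage x).fderiv]
    simpa using norm_integral_le_of_norm_le_const (μ := ν) (ae_of_all _ (hK x))

lemma velocityAverage_pos (hh : IsRegularDensity h) (x : E) : 0 < velocityAverage ν h x := by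
  obtain ⟨v⟩ := nonempty_of_isProbabilityMeasure ν
  exact (hh.velocityAverage ν).pos x v

lemma integral_rpow_le_velocityAverage_rpow (hh : IsRegularDensity h) {r : ℝ} (hr0 : 0 ≤ r)
    (hr1 : r ≤ 1) (x : E) : ∫ v, h x v ^ r ∂ν ≤ velocityAverage ν h x ^ r :=
  integral_rpow_le_rpow_integral hr0 hr1 (fun v => (hh.pos x v).le) (hh.integrable x)
    (hh.integrable_rpow r x)

lemma gradSq_rpow_sub_rpow_div [Fintype ι] (hh : IsRegularDensity h) {p : ℝ} (hp : p ≠ 1)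
    (e : ι → E) (x : E) (v : V) :
    gradSq e (fun y => (velocityAverage ν h y ^ (p - 1) - h y v ^ (p - 1)) / (p - 1)) x
      = ∑ i, (velocityAverage ν h x ^ (p - 2) * fderiv ℝ (velocityAverage ν h) x (e i)
          - h x v ^ (p - 2) * fderiv ℝ (fun y => h y v) x (e i)) ^ 2 := by
  have hderiv := hasFDerivAt_rpow_sub_rpow_div (sub_ne_zero.2 hp)
    (hh.hasFDerivAt_velocityAverage (ν := ν) x).differentiableAt.hasFDerivAt
    (hh.differentiable v x).hasFDerivAt (hh.velocityAverage_pos x).ne' (hh.pos x v).ne'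
  rw [sub_sub, one_add_one_eq_two] at hderiv
  simp only [gradSq, hderiv.fderiv, sub_apply, smul_apply, smul_eq_mul]

lemma integral_gradSq_mul_rpow_le [Fintype ι] (hh : IsRegularDensity h) {p : ℝ} (hp1 : 1 < p)
    (hp2 : p ≤ 2) (e : ι → E) (x : E) :
    ∫ v, gradSq e
          (fun y => (velocityAverage ν h y ^ (p - 1) - h y v ^ (p - 1)) / (p - 1)) x
        * h x v ^ (2 - p) ∂ν
      ≤ ∫ v, h x v ^ (p - 2) * gradSq e (fun y => h y v) x ∂ν
        - velocityAverage ν h x ^ (p - 2) * gradSq e (velocityAverage ν h) x := by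
  have hinv : ∀ v, h x v ^ (p - 2) = (h x v ^ (2 - p))⁻¹ := fun v =>
    rpow_sub_two_eq_inv (hh.pos x v).le p
  have hG := hh.velocityAverage_pos (ν := ν) x
  simp only [hh.gradSq_rpow_sub_rpow_div hp1.ne', hinv, rpow_sub_two_eq_inv hG.le]
  simp only [gradSq, hh.fderiv_velocityAverage_apply]
  exact integral_sum_sub_sq_mul_weight_le (fun v => rpow_pos_of_pos (hh.pos x v) _)
    (hh.integrable_rpow _ x)
    (fun i => (hh.integrable_fderiv x).apply_continuousLinearMap (e i))
    (fun i => by simpa only [hinv] using hh.integrable_rpow_mul_fderiv_sq (p - 2) x (e i))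
    (rpow_pos_of_pos hG _)
    (hh.integral_rpow_le_velocityAverage_rpow (sub_nonneg.2 hp2) (by linarith) x)

end VelocityAverage

end IsRegularDensity

theorem p_relative_fisher_bound_general {E V ι : Type*} [NormedAddCommGroup E] [NormedSpace ℝ E]
    [MeasurableSpace E] [MeasurableSpace V] [Fintype ι] (ρ : Measure E) [IsFiniteMeasure ρ]
    (ν : Measure V) [IsProbabilityMeasure ν] {p : ℝ} (hp1 : 1 < p) (hp2 : p ≤ 2)
    {h : E → V → ℝ} (hh : IsRegularDensity h) (e : ι → E) :
    ∫ x, ∫ v, gradSq e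
          (fun y => (velocityAverage ν h y ^ (p - 1) - h y v ^ (p - 1)) / (p - 1)) x
        * h x v ^ (2 - p) ∂ν ∂ρ
      ≤ (∫ x, ∫ v, h x v ^ (p - 2) * gradSq e (fun y => h y v) x ∂ν ∂ρ)
        - ∫ x, velocityAverage ν h x ^ (p - 2) * gradSq e (velocityAverage ν h) x ∂ρ := by
  have hint : Integrable (fun x => ∫ v, h x v ^ (p - 2) * gradSq e (fun y => h y v) x ∂ν) ρ :=
    (hh.integrable_prod_rpow_mul_gradSq (ρ.prod ν) (p - 2) e).integral_prod_left
  have hint_avg : Integrable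
      (fun x => velocityAverage ν h x ^ (p - 2) * gradSq e (velocityAverage ν h) x) ρ := by
    simpa using ((hh.velocityAverage ν).integrable_prod_rpow_mul_gradSq (ρ.prod ν) (p - 2)
      e).integral_prod_left
  rw [← integral_sub hint hint_avg]
  refine integral_mono_of_nonneg (ae_of_all _ fun x => integral_nonneg fun v => ?_)
    (hint.sub hint_avg) (ae_of_all _ fun x => hh.integral_gradSq_mul_rpow_le hp1 hp2 e x)
  exact mul_nonneg (gradSq_nonneg e _ x) (rpow_nonneg (hh.pos x v).le _)

section Gaussian

lemma gauss_nonneg (d : ℕ) (v : Fin d → ℝ) : 0 ≤ gauss d v := by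
  unfold gauss
  positivity

lemma measurable_gauss (d : ℕ) : Measurable (gauss d) := by
  unfold gauss
  fun_prop

lemma gauss_eq_prod (d : ℕ) (v : Fin d → ℝ) :
    gauss d v = (2 * π) ^ (-(d : ℝ) / 2) * ∏ i, exp (-(1 / 2) * v i ^ 2) := by
  rw [gauss, ← exp_sum, ← Finset.mul_sum]
  ring_nf

lemma integrable_gauss (d : ℕ) : Integrable (gauss d) := by
  simp_rw [funext (gauss_eq_prod d)]
  exact (Integrable.fintype_prod (f := fun (_ : Fin d) (t : ℝ) => exp (-(1 / 2) * t ^ 2))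
    fun _ => integrable_exp_neg_mul_sq (by norm_num)).const_mul _

lemma integral_gauss (d : ℕ) : ∫ v, gauss d v = 1 := by
  have hprod : ∫ v : Fin d → ℝ, ∏ i, exp (-(1 / 2) * v i ^ 2) = (2 * π) ^ ((d : ℝ) / 2) := by
    rw [integral_fintype_prod_volume_eq_pow (fun t : ℝ => exp (-(1 / 2) * t ^ 2)),
      integral_gaussian, Fintype.card_fin, sqrt_eq_rpow, ← rpow_mul_natCast (by positivity)]
    congr 1 <;> ring
  simp_rw [gauss_eq_prod]
  rw [integral_const_mul, hprod, ← rpow_add (by positivity), neg_div, neg_add_cancel, rpow_zero]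

/-- The Gaussian probability measure `ℳ(v) dv` on `ℝ^d`. It is defined through the density `gauss`,
so that integrals against it unfold to those in `proj` and `intMu`. -/
def gaussMeasure (d : ℕ) : Measure (Fin d → ℝ) :=
  volume.withDensity fun v => ENNReal.ofReal (gauss d v)

instance isProbabilityMeasure_gaussMeasure (d : ℕ) : IsProbabilityMeasure (gaussMeasure d) where
  measure_univ := by
    rw [gaussMeasure, withDensity_apply _ .univ, Measure.restrict_univ,
      ← ofReal_integral_eq_lintegral_ofReal (integrable_gauss d) (ae_of_all _ (gauss_nonneg d)),
      integral_gauss, ENNReal.ofReal_one]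

lemma integral_gaussMeasure (d : ℕ) (f : (Fin d → ℝ) → ℝ) :
    ∫ v, f v ∂gaussMeasure d = ∫ v, f v * gauss d v := by
  rw [gaussMeasure, integral_withDensity_eq_integral_toReal_smul
    (measurable_gauss d).ennreal_ofReal (ae_of_all _ fun _ => ENNReal.ofReal_lt_top)]
  simp only [ENNReal.toReal_ofReal (gauss_nonneg d _), smul_eq_mul, mul_comm]

lemma proj_eq_velocityAverage (d : ℕ) (h : (Fin d → ℝ) → (Fin d → ℝ) → ℝ) :
    proj d h = velocityAverage (gaussMeasure d) h :=
  funext fun _ => (integral_gaussMeasure d _).symm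

lemma intMu_eq_integral_gaussMeasure (d : ℕ) (F : (Fin d → ℝ) → (Fin d → ℝ) → ℝ) :
    intMu d F = ∫ x in cube d, ∫ v, F x v ∂gaussMeasure d := by
  simp only [intMu, integral_gaussMeasure]

instance isFiniteMeasure_restrict_cube (d : ℕ) :
    IsFiniteMeasure ((volume : Measure (Fin d → ℝ)).restrict (cube d)) :=
  isFiniteMeasure_restrict.2 isCompact_Icc.measure_ne_top

end Gaussian

section StandardBasis

variable {d : ℕ}

lemma nsq_grad1_eq_gradSq (g : (Fin d → ℝ) → ℝ) (x : Fin d → ℝ) :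
    nsq d (grad1 d g x) = gradSq (fun i => Pi.single i 1) g x := rfl

lemma nsq_gradx_eq_gradSq (f : (Fin d → ℝ) → (Fin d → ℝ) → ℝ) (x v : Fin d → ℝ) :
    nsq d (gradx d f x v) = gradSq (fun i => Pi.single i 1) (fun y => f y v) x := rfl

end StandardBasis

section RegularStatic

variable {d : ℕ} {h : (Fin d → ℝ) → (Fin d → ℝ) → ℝ}

lemma RegularStatic.hasFDerivAt_left (hreg : RegularStatic d h) (x v : Fin d → ℝ) :
    HasFDerivAt (fun y => h y v)
      ((fderiv ℝ (fun q : (Fin d → ℝ) × (Fin d → ℝ) => h q.1 q.2) (x, v)).comp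
        (.inl ℝ _ _)) x :=
  (hreg.1.differentiable (by simp) (x, v)).hasFDerivAt.comp (f := fun y => (y, v)) x
    (hasFDerivAt_prodMk_left x v)

lemma RegularStatic.isRegularDensity (hreg : RegularStatic d h) : IsRegularDensity h where
  measurable := hreg.1.continuous.measurable
  differentiable v x := (hreg.hasFDerivAt_left x v).differentiableAt
  stronglyMeasurable_fderiv := by
    simp_rw [fun x v => (hreg.hasFDerivAt_left x v).fderiv]
    exact ((hreg.1.continuous_fderiv (by simp)).clm_comp continuous_const).stronglyMeasurable
  exists_mem_Icc := hreg.2.2.1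
  exists_norm_fderiv_le := by
    obtain ⟨K, hK⟩ := hreg.2.2.2
    refine ⟨K, fun x v => ?_⟩
    rw [(hreg.hasFDerivAt_left x v).fderiv]
    exact (ContinuousLinearMap.opNorm_comp_le _ _).trans <| (mul_le_of_le_one_right
      (norm_nonneg _) (ContinuousLinearMap.norm_inl_le_one ℝ _ _)).trans (hK (x, v))

end RegularStatic

/-- `p`-version of the relative Fisher information bound:
`∫ |∇_x(((Πh)^{p-1} - h^{p-1})/(p-1))|² h^{2-p} dμ
   ≤ ∫ h^{p-2} |∇_x h|² dμ - ∫_{𝕋^d} (Πh)^{p-2} |∇_x Πh|² dx`. -/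
theorem p_relative_fisher_bound
    (d : ℕ) (hd : 1 ≤ d) (p : ℝ) (hp1 : 1 < p) (hp2 : p ≤ 2)
    (h : (Fin d → ℝ) → (Fin d → ℝ) → ℝ)
    (hpos : ∀ x v, 0 < h x v) (hreg : RegularStatic d h) :
    (intMu d fun x v =>
        nsq d (gradx d
            (fun y w => ((proj d h y) ^ (p - 1) - (h y w) ^ (p - 1)) / (p - 1)) x v)
          * h x v ^ (2 - p))
      ≤ (intMu d fun x v => h x v ^ (p - 2) * nsq d (gradx d h x v))
        - ∫ x in cube d, (proj d h x) ^ (p - 2) * nsq d (grad1 d (proj d h) x) := by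
  simpa only [intMu_eq_integral_gaussMeasure, proj_eq_velocityAverage, nsq_gradx_eq_gradSq,
    nsq_grad1_eq_gradSq] using p_relative_fisher_bound_general (volume.restrict (cube d))
      (gaussMeasure d) hp1 hp2 hreg.isRegularDensity fun i => Pi.single i 1

end
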